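/- arXiv:math/0512053 — 2 statements merged into one kernel-verified Lean document; each statement's English description precedes it below -/
import Mathlib

section
/- For every λ ∈ (0, 1) there exists a function g : ℝ → ℝ which is real-analytic, odd, 2π-periodic with minimal period 2π, not identically zero, and satisfies g''(t) + ⟨g²⟩ g(t) − λ g(t)³ = 0 for all t ∈ ℝ; moreover g is non-degenerate in the space of odd 2π-periodic functions: every C², odd, 2π-periodic function h : ℝ → ℝ satisfying h''(t) + (⟨g²⟩ − 3λ g(t)²) h(t) = −2⟨g h⟩ g(t) for all t is identically zero. -/
open Real

/-- Average of a function over one period `[0, 2π]`. -/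
noncomputable def avg (f : ℝ → ℝ) : ℝ := (1 / (2 * π)) * ∫ t in (0:ℝ)..(2 * π), f t

/-!
The wave `g` is a Jacobi elliptic sine of parameter `m ∈ (0, 1)`, rescaled in time to have period
`2π`. Matching the averaged coefficient `⟨g²⟩` with the linear coefficient of the Duffing equation
solved by `sn` leaves the single condition `λ = 2 m ⟨sn²⟩ / (1 + m)`, whose right-hand side takes
every value in `(0, 1)`.

For the non-degeneracy write `a = ⟨g²⟩`, `E = g'(0)²`, and let `P` be the primitive of `g² - a`
vanishing at `0`. The solutions vanishing at `0` of the linearised equation with forcing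
proportional to `g` are spanned by the scaling mode `g + t g'` and by a periodic mode
`w = λ P g' - λ g³ + (2 - λ) a g`. The secular term `t g'` excludes the first mode from a periodic
`h`, so `h = β w`. Comparing the forcing of `β w` with `-2 ⟨g h⟩ = -2 β ⟨g w⟩` gives
`β (λ (a² - 2 λ E) + 2 E (1 - λ)²) = 0`. As `g` oscillates inside the separatrix `2 λ E = a²`, the
factor of `β` is positive.
-/

open Filter Set Topology

lemma avg_const_mul (c : ℝ) (f : ℝ → ℝ) : avg (fun t => c * f t) = c * avg f := by
  simp only [avg, intervalIntegral.integral_const_mul]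
  ring

lemma avg_eq_of_hasDerivAt_sub {f F : ℝ → ℝ} {c : ℝ} (hf : Continuous f)
    (hF : ∀ t, HasDerivAt F (f t - c) t) (hF_per : F (2 * π) = F 0) : avg f = c := by
  have hint : ∫ t in (0 : ℝ)..(2 * π), (f t - c) = F (2 * π) - F 0 :=
    intervalIntegral.integral_eq_sub_of_hasDerivAt (fun t _ => hF t)
      ((hf.sub continuous_const).intervalIntegrable _ _)
  rw [intervalIntegral.integral_sub (hf.intervalIntegrable _ _) (by simp),
    intervalIntegral.integral_const, hF_per, smul_eq_mul] at hint
  rw [avg]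
  field_simp
  linear_combination hint

/-- The primitive of `f - ⟨f⟩` vanishing at `0`; subtracting the average makes it vanish at `2π`
as well. -/
noncomputable def meanFreePrimitive (f : ℝ → ℝ) (t : ℝ) : ℝ := ∫ s in (0 : ℝ)..t, (f s - avg f)

lemma meanFreePrimitive_zero (f : ℝ → ℝ) : meanFreePrimitive f 0 = 0 :=
  intervalIntegral.integral_same

lemma meanFreePrimitive_two_pi {f : ℝ → ℝ} (hf : Continuous f) :
    meanFreePrimitive f (2 * π) = 0 := by
  rw [meanFreePrimitive, intervalIntegral.integral_sub (hf.intervalIntegrable _ _) (by simp),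
    intervalIntegral.integral_const, avg, smul_eq_mul]
  field_simp
  ring

lemma hasDerivAt_meanFreePrimitive {f : ℝ → ℝ} (hf : Continuous f) (t : ℝ) :
    HasDerivAt (meanFreePrimitive f) (f t - avg f) t :=
  ((hf.sub continuous_const).integral_hasStrictDerivAt 0 t).hasDerivAt

/-- `x` solves the forced Hill equation `x'' + q x = f` on `ℝ`. -/
structure IsHillSolution (q f x : ℝ → ℝ) : Prop where
  differentiable : Differentiable ℝ x
  hasDerivAt_deriv : ∀ t, HasDerivAt (deriv x) (f t - q t * x t) t

namespace IsHillSolution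

variable {q f f₁ f₂ g x x' y z : ℝ → ℝ}

lemma of_hasDerivAt (hx : ∀ t, HasDerivAt x (x' t) t)
    (hx' : ∀ t, HasDerivAt x' (f t - q t * x t) t) : IsHillSolution q f x where
  differentiable t := (hx t).differentiableAt
  hasDerivAt_deriv := by rwa [show deriv x = x' from funext fun t => (hx t).deriv]

lemma hasDerivAt (hx : IsHillSolution q f x) (t : ℝ) : HasDerivAt x (deriv x t) t :=
  (hx.differentiable t).hasDerivAt

lemma of_contDiff (hx : ContDiff ℝ 2 x) (h : ∀ t, deriv (deriv x) t + q t * x t = f t) :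
    IsHillSolution q f x :=
  of_hasDerivAt (fun t => (hx.differentiable two_ne_zero t).hasDerivAt) fun t =>
    (hx.differentiable_deriv_two t).hasDerivAt.congr_deriv (eq_sub_of_add_eq (h t))

lemma const_mul (c : ℝ) (hx : IsHillSolution q f x) :
    IsHillSolution q (fun t => c * f t) (fun t => c * x t) :=
  of_hasDerivAt (fun t => (hx.hasDerivAt t).const_mul c)
    fun t => ((hx.hasDerivAt_deriv t).const_mul c).congr_deriv (by ring)

lemma add (hx : IsHillSolution q f₁ x) (hy : IsHillSolution q f₂ y) :
    IsHillSolution q (fun t => f₁ t + f₂ t) (fun t => x t + y t) :=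
  of_hasDerivAt (fun t => (hx.hasDerivAt t).add (hy.hasDerivAt t))
    fun t => ((hx.hasDerivAt_deriv t).add (hy.hasDerivAt_deriv t)).congr_deriv (by ring)

lemma eq_of_initial_eq (hq : Continuous q) (hx : IsHillSolution q f x) (hy : IsHillSolution q f y)
    {t₀ : ℝ} (h₀ : x t₀ = y t₀) (h₀' : deriv x t₀ = deriv y t₀) : x = y := by
  funext t
  set a := min t₀ t - 1
  set b := max t₀ t + 1
  obtain ⟨C, hC⟩ := isCompact_Icc.exists_bound_of_continuousOn (s := Icc a b) hq.continuousOn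
  let v : ℝ → ℝ × ℝ → ℝ × ℝ := fun s p => (p.2, f s - q s * p.1)
  have hv : ∀ s ∈ Ioo a b, LipschitzOnWith (1 ⊔ C.toNNReal) (v s) univ := fun s hs => by
    rw [lipschitzOnWith_univ]
    refine LipschitzWith.prodMk LipschitzWith.prod_snd (LipschitzWith.of_dist_le_mul fun p r => ?_)
    calc dist (f s - q s * p.1) (f s - q s * r.1) = ‖q s‖ * dist p.1 r.1 := by
          rw [dist_sub_left, dist_eq, ← mul_sub, abs_mul, dist_eq, norm_eq_abs]
      _ ≤ C.toNNReal * dist p r :=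
          mul_le_mul ((hC s (Ioo_subset_Icc_self hs)).trans (le_coe_toNNReal C))
            (le_max_left _ _) dist_nonneg NNReal.zero_le_coe
  have hsol : ∀ {w : ℝ → ℝ}, IsHillSolution q f w → ∀ s ∈ Ioo a b,
      HasDerivAt (fun s => (w s, deriv w s)) (v s (w s, deriv w s)) s ∧
        (w s, deriv w s) ∈ (univ : Set (ℝ × ℝ)) := fun hw s _ =>
    ⟨(hw.hasDerivAt s).prodMk (hw.hasDerivAt_deriv s), mem_univ _⟩
  have hmem : ∀ s ∈ ({t₀, t} : Set ℝ), s ∈ Ioo a b := by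
    rintro s (rfl | rfl) <;> constructor <;> grind
  exact congrArg Prod.fst (ODE_solution_unique_of_mem_Ioo hv (hmem t₀ (by simp)) (hsol hx)
    (hsol hy) (Prod.ext h₀ h₀') (hmem t (by simp)))

lemma exists_eq_linear_combination (hq : Continuous q) {κ μ c t₀ : ℝ}
    (hx : IsHillSolution q (fun t => κ * g t) x) (hy : IsHillSolution q (fun t => μ * g t) y)
    (hz : IsHillSolution q (fun t => c * g t) z) (hx₀ : x t₀ = 0) (hy₀ : y t₀ = 0)
    (hz₀ : z t₀ = 0) (hdet : deriv x t₀ * μ - deriv y t₀ * κ ≠ 0) :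
    ∃ β γ : ℝ, c = β * κ + γ * μ ∧ ∀ t, z t = β * x t + γ * y t := by
  set D := deriv x t₀ * μ - deriv y t₀ * κ with hD
  set β := (deriv z t₀ * μ - deriv y t₀ * c) / D with hβ
  set γ := (deriv x t₀ * c - deriv z t₀ * κ) / D with hγ
  have hc : c = β * κ + γ * μ := by
    simp only [hβ, hγ]
    field_simp
    rw [hD]
    ring
  have hsum := (hx.const_mul β).add (hy.const_mul γ)
  have hforcing : (fun t => β * (κ * g t) + γ * (μ * g t)) = fun t => c * g t := by
    funext t
    rw [hc]
    ring
  rw [hforcing] at hsum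
  refine ⟨β, γ, hc, fun t => congrFun (hz.eq_of_initial_eq hq hsum (t₀ := t₀) ?_ ?_) t⟩
  · simp only [hx₀, hy₀, hz₀, mul_zero, add_zero]
  · rw [(((hx.hasDerivAt t₀).const_mul β).fun_add ((hy.hasDerivAt t₀).const_mul γ)).deriv]
    simp only [hβ, hγ]
    field_simp
    rw [hD]
    ring

end IsHillSolution

/-- `g` solves the Duffing equation `g'' + a g = lam g³`, viewed as a Hill equation with constant
potential. -/
abbrev IsDuffingSolution (a lam : ℝ) (g : ℝ → ℝ) : Prop :=
  IsHillSolution (fun _ => a) (fun t => lam * g t ^ 3) g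

/-- Twice the mechanical energy of the Duffing equation `g'' + a g = lam g³`. -/
noncomputable def duffingEnergy (a lam : ℝ) (g : ℝ → ℝ) (t : ℝ) : ℝ :=
  deriv g t ^ 2 + a * g t ^ 2 - lam / 2 * g t ^ 4

/-- The potential `a - 3 lam g²` of the linearisation at `g` of the Duffing equation. -/
def duffingPotential (a lam : ℝ) (g : ℝ → ℝ) (t : ℝ) : ℝ := a - 3 * lam * g t ^ 2

/-- The derivative at `μ = 1` of the rescalings `t ↦ μ g (μ t)`, which turn a solution of the
Duffing equation with linear coefficient `a` into one with linear coefficient `μ² a`. -/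
noncomputable def scalingMode (g : ℝ → ℝ) (t : ℝ) : ℝ := g t + t * deriv g t

/-- A solution, linear in a primitive `P` of `g² - a`, of the linearised Duffing equation with
forcing proportional to `g`. Unlike `scalingMode g` it has no secular term, so it is periodic
whenever `g` and `P` are. -/
noncomputable def quadratureMode (a lam : ℝ) (P g : ℝ → ℝ) (t : ℝ) : ℝ :=
  lam * P t * deriv g t - lam * g t ^ 3 + (2 - lam) * a * g t

namespace IsDuffingSolution

variable {a lam : ℝ} {g P : ℝ → ℝ}

lemma hasDerivAt_duffingEnergy (hg : IsDuffingSolution a lam g) (t : ℝ) :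
    HasDerivAt (duffingEnergy a lam g) 0 t := by
  refine ((((hg.hasDerivAt_deriv t).pow 2).add (((hg.hasDerivAt t).pow 2).const_mul a)).sub
    (((hg.hasDerivAt t).pow 4).const_mul (lam / 2))).congr_deriv ?_
  push_cast
  ring

lemma duffingEnergy_eq (hg : IsDuffingSolution a lam g) (s t : ℝ) :
    duffingEnergy a lam g s = duffingEnergy a lam g t :=
  is_const_of_deriv_eq_zero (fun t => (hg.hasDerivAt_duffingEnergy t).differentiableAt)
    (fun t => (hg.hasDerivAt_duffingEnergy t).deriv) s t

lemma sq_deriv_eq_duffingEnergy (hg : IsDuffingSolution a lam g) {t : ℝ} (ht : g t = 0) (s : ℝ) :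
    deriv g t ^ 2 = duffingEnergy a lam g s := by
  rw [hg.duffingEnergy_eq s t, duffingEnergy, ht]
  ring

lemma deriv_ne_zero (hg : IsDuffingSolution a lam g) {s t : ℝ} (ht : g t = 0)
    (hE : duffingEnergy a lam g s ≠ 0) : deriv g t ≠ 0 :=
  pow_ne_zero_iff two_ne_zero |>.1 (hg.sq_deriv_eq_duffingEnergy ht s ▸ hE)

lemma continuous_duffingPotential (hg : IsDuffingSolution a lam g) :
    Continuous (duffingPotential a lam g) :=
  continuous_const.sub (continuous_const.mul (hg.differentiable.continuous.pow 2))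

lemma hasDerivAt_force (hg : IsDuffingSolution a lam g) (t : ℝ) :
    HasDerivAt (fun t => lam * g t ^ 3 - a * g t)
      (-(duffingPotential a lam g t * deriv g t)) t := by
  refine ((((hg.hasDerivAt t).fun_pow 3).const_mul lam).fun_sub
    ((hg.hasDerivAt t).const_mul a)).congr_deriv ?_
  rw [duffingPotential]
  push_cast
  ring

lemma isHillSolution_scalingMode (hg : IsDuffingSolution a lam g) :
    IsHillSolution (duffingPotential a lam g) (fun t => -2 * a * g t) (scalingMode g) := by
  refine .of_hasDerivAt (x' := fun t => 2 * deriv g t + t * (lam * g t ^ 3 - a * g t))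
    (fun t => ?_) fun t => ?_
  · exact ((hg.hasDerivAt t).add ((hasDerivAt_id' t).mul (hg.hasDerivAt_deriv t))).congr_deriv
      (by ring)
  · refine (((hg.hasDerivAt_deriv t).const_mul 2).add ((hasDerivAt_id' t).mul
      (hg.hasDerivAt_force t))).congr_deriv ?_
    rw [scalingMode, duffingPotential]
    ring

lemma hasDerivAt_quadratureMode (hg : IsDuffingSolution a lam g)
    (hP : ∀ t, HasDerivAt P (g t ^ 2 - a) t) (t : ℝ) :
    HasDerivAt (quadratureMode a lam P g)
      (2 * (1 - lam) * a * deriv g t - 2 * lam * (g t ^ 2 * deriv g t)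
        + lam * P t * (lam * g t ^ 3 - a * g t)) t := by
  refine (((((hP t).const_mul lam).mul (hg.hasDerivAt_deriv t)).sub
    (((hg.hasDerivAt t).pow 3).const_mul lam)).add
    ((hg.hasDerivAt t).const_mul ((2 - lam) * a))).congr_deriv ?_
  push_cast
  ring

lemma isHillSolution_quadratureMode (hg : IsDuffingSolution a lam g)
    (hP : ∀ t, HasDerivAt P (g t ^ 2 - a) t) :
    IsHillSolution (duffingPotential a lam g)
      (fun t => lam * (2 * a ^ 2 - 4 * duffingEnergy a lam g 0) * g t)
      (quadratureMode a lam P g) := by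
  refine .of_hasDerivAt (hg.hasDerivAt_quadratureMode hP) fun t => ?_
  refine ((((hg.hasDerivAt_deriv t).const_mul (2 * (1 - lam) * a)).sub
    ((((hg.hasDerivAt t).fun_pow 2).mul (hg.hasDerivAt_deriv t)).const_mul (2 * lam))).add
    (((hP t).const_mul lam).mul (hg.hasDerivAt_force t))).congr_deriv ?_
  rw [hg.duffingEnergy_eq 0 t]
  simp only [duffingPotential, quadratureMode, duffingEnergy]
  push_cast
  ring

lemma avg_mul_quadratureMode (hg : IsDuffingSolution a lam g)
    (hP : ∀ t, HasDerivAt P (g t ^ 2 - a) t) (hg₀ : g 0 = 0) (hg_per : g (2 * π) = 0)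
    (hP_per : P (2 * π) = P 0) :
    avg (fun t => g t * quadratureMode a lam P g t) =
      duffingEnergy a lam g 0 - lam / 2 * a ^ 2 := by
  have hcont : Continuous fun t => g t * quadratureMode a lam P g t :=
    hg.differentiable.continuous.mul
      (hg.isHillSolution_quadratureMode hP).differentiable.continuous
  refine avg_eq_of_hasDerivAt_sub hcont (F := fun t =>
    lam / 2 * (P t * g t ^ 2) - g t * deriv g t - lam / 2 * a * P t) (fun t => ?_) ?_
  · refine (((((hP t).mul ((hg.hasDerivAt t).pow 2)).const_mul (lam / 2)).sub
      ((hg.hasDerivAt t).mul (hg.hasDerivAt_deriv t))).sub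
      ((hP t).const_mul (lam / 2 * a))).congr_deriv ?_
    rw [hg.duffingEnergy_eq 0 t]
    simp only [quadratureMode, duffingEnergy, Pi.pow_apply]
    push_cast
    ring
  · simp only [hg₀, hg_per, hP_per]
    ring

/-- The two modes span the solutions vanishing at `0` of the linearised equation with forcing
proportional to `g`: the determinant of their data is `-4 g'(0) (a² - 2 lam E)`, which vanishes
exactly on the separatrix. -/
lemma exists_eq_linear_combination_modes (hg : IsDuffingSolution a lam g)
    (hP : ∀ t, HasDerivAt P (g t ^ 2 - a) t) (hg₀ : g 0 = 0) (hP₀ : P 0 = 0)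
    (hE : duffingEnergy a lam g 0 ≠ 0) (hsep : 2 * lam * duffingEnergy a lam g 0 ≠ a ^ 2)
    {c : ℝ} {h : ℝ → ℝ} (hh : IsHillSolution (duffingPotential a lam g) (fun t => c * g t) h)
    (hh₀ : h 0 = 0) :
    ∃ β γ : ℝ, c = β * (lam * (2 * a ^ 2 - 4 * duffingEnergy a lam g 0)) + γ * (-2 * a) ∧
      ∀ t, h t = β * quadratureMode a lam P g t + γ * scalingMode g t := by
  refine (hg.isHillSolution_quadratureMode hP).exists_eq_linear_combination
    hg.continuous_duffingPotential hg.isHillSolution_scalingMode hh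
    (by simp [quadratureMode, hg₀, hP₀]) (by simp [scalingMode, hg₀]) hh₀ ?_
  have hscaling : deriv (scalingMode g) 0 = 2 * deriv g 0 := by
    refine (((hg.hasDerivAt 0).add
      ((hasDerivAt_id' 0).mul (hg.hasDerivAt_deriv 0))).congr_deriv ?_).deriv
    ring
  rw [hscaling, (hg.hasDerivAt_quadratureMode hP 0).deriv, hg₀, hP₀]
  convert mul_ne_zero (mul_ne_zero (by norm_num : (-4 : ℝ) ≠ 0) (hg.deriv_ne_zero hg₀ hE))
    (sub_ne_zero.2 hsep.symm) using 1
  ring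

lemma eq_zero_of_linearization (hlam : 0 < lam)
    (hg : IsDuffingSolution (avg fun s => g s ^ 2) lam g) (hg₀ : g 0 = 0) (hg_per : g (2 * π) = 0)
    (hE : duffingEnergy (avg fun s => g s ^ 2) lam g 0 ≠ 0)
    (hsep : 2 * lam * duffingEnergy (avg fun s => g s ^ 2) lam g 0 < (avg fun s => g s ^ 2) ^ 2)
    {h : ℝ → ℝ} (hh : IsHillSolution (duffingPotential (avg fun s => g s ^ 2) lam g)
      (fun t => -(2 * avg fun s => g s * h s) * g t) h)
    (hh₀ : h 0 = 0) (hh_per : h (2 * π) = 0) : h = 0 := by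
  have hcont : Continuous fun t => g t ^ 2 := hg.differentiable.continuous.pow 2
  set a := avg fun s => g s ^ 2
  set P := meanFreePrimitive fun s => g s ^ 2
  set E := duffingEnergy a lam g 0
  have hP : ∀ t, HasDerivAt P (g t ^ 2 - a) t := hasDerivAt_meanFreePrimitive hcont
  have hP₀ : P 0 = 0 := meanFreePrimitive_zero _
  have hP_per : P (2 * π) = 0 := meanFreePrimitive_two_pi hcont
  obtain ⟨β, γ, hc, hcomb⟩ :=
    hg.exists_eq_linear_combination_modes hP hg₀ hP₀ hE hsep.ne hh hh₀
  have hγ : γ = 0 := by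
    have hg'_per : deriv g (2 * π) ≠ 0 := hg.deriv_ne_zero hg_per hE
    have hend := hcomb (2 * π)
    simp only [hh_per, quadratureMode, scalingMode, hg_per, hP_per] at hend
    refine (mul_eq_zero.1 ?_).resolve_right (mul_ne_zero two_pi_pos.ne' hg'_per)
    linear_combination -hend
  have hh_eq : ∀ t, h t = β * quadratureMode a lam P g t := fun t => by
    rw [hcomb t, hγ, zero_mul, add_zero]
  have havg : avg (fun s => g s * h s) = β * (E - lam / 2 * a ^ 2) := by
    simp only [hh_eq, mul_left_comm (g _) β]
    rw [avg_const_mul, hg.avg_mul_quadratureMode hP hg₀ hg_per (hP_per.trans hP₀.symm)]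
  have hβ : β = 0 := by
    have hE_nonneg : 0 ≤ E := (sq_nonneg _).trans_eq (hg.sq_deriv_eq_duffingEnergy hg₀ 0)
    have hpos : 0 < lam * (a ^ 2 - 2 * lam * E) + 2 * E * (1 - lam) ^ 2 :=
      add_pos_of_pos_of_nonneg (mul_pos hlam (sub_pos.2 hsep)) (by positivity)
    refine (mul_eq_zero.1 ?_).resolve_right hpos.ne'
    rw [havg, hγ] at hc
    linear_combination -hc
  funext t
  rw [hh_eq t, hβ, zero_mul, Pi.zero_apply]

end IsDuffingSolution

/-- Jacobi's delta amplitude `√(1 - m sin² θ)` with parameter `m = k²`. -/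
noncomputable def jacobiDelta (m θ : ℝ) : ℝ := √(1 - m * sin θ ^ 2)

/-- The incomplete elliptic integral of the first kind with parameter `m = k²`. -/
noncomputable def ellipticF (m θ : ℝ) : ℝ := ∫ x in (0 : ℝ)..θ, 1 / jacobiDelta m x

/-- Legendre's incomplete elliptic integral `D = (F - E) / m`. -/
noncomputable def ellipticD (m θ : ℝ) : ℝ := ∫ x in (0 : ℝ)..θ, sin x ^ 2 / jacobiDelta m x

/-- The Jacobi amplitude, the inverse of the elliptic integral of the first kind; it is only
meaningful for `m < 1`, where that integral is a bijection of `ℝ`. -/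
noncomputable def jacobiAm (m : ℝ) : ℝ → ℝ := Function.invFun (ellipticF m)

/-- The Jacobi elliptic sine with parameter `m = k²`. -/
noncomputable def jacobiSn (m t : ℝ) : ℝ := sin (jacobiAm m t)

lemma analyticAt_of_hasDerivAt_re {F : ℝ → ℝ} {f : ℂ → ℂ} {x : ℝ} (hf : AnalyticAt ℂ f x)
    (hF : ∀ᶠ y : ℝ in 𝓝 x, HasDerivAt F (f y).re y) : AnalyticAt ℝ F x := by
  obtain ⟨r, hr, hball⟩ := Metric.eventually_nhds_iff_ball.1 hf.eventually_analyticAt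
  obtain ⟨G, hG⟩ := DifferentiableOn.isExactOn_ball (c := (x : ℂ)) (r := r)
    fun z hz => (hball z hz).differentiableAt.differentiableWithinAt
  have hG_analytic : AnalyticAt ℂ G x :=
    DifferentiableOn.analyticAt (s := Metric.ball (x : ℂ) r)
      (fun z hz => (hG z hz).differentiableAt.differentiableWithinAt) (Metric.ball_mem_nhds _ hr)
  obtain ⟨ε, hε, hF_ball⟩ := Metric.eventually_nhds_iff_ball.1
    (hF.and (Complex.continuous_ofReal.continuousAt.eventually (Metric.ball_mem_nhds _ hr)))
  have hre : ∀ y ∈ Metric.ball x ε,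
      HasDerivAt (fun y : ℝ => (G y).re + (F x - (G x).re)) (f y).re y := fun y hy =>
    (hG y (hF_ball y hy).2).real_of_complex.add_const _
  have hG_real : AnalyticAt ℝ (fun y : ℝ => (G y).re + (F x - (G x).re)) x :=
    hG_analytic.re_ofReal.add analyticAt_const
  refine hG_real.congr ?_
  filter_upwards [Metric.ball_mem_nhds x hε] with y hy
  exact Metric.isOpen_ball.eqOn_of_deriv_eq (convex_ball x ε).isPreconnected
    (fun z hz => (hre z hz).differentiableAt.differentiableWithinAt)
    (fun z hz => (hF_ball z hz).1.differentiableAt.differentiableWithinAt)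
    (fun z hz => (hre z hz).deriv.trans (hF_ball z hz).1.deriv.symm)
    (Metric.mem_ball_self hε) (add_sub_cancel _ _) hy

section Elliptic

variable {m : ℝ}

lemma one_sub_mul_sin_sq_pos (hm : m < 1) (θ : ℝ) : 0 < 1 - m * sin θ ^ 2 := by
  rcases le_or_gt m 0 with hm₀ | hm₀ <;> nlinarith [sq_nonneg (sin θ), sin_sq_le_one θ]

lemma jacobiDelta_pos (hm : m < 1) (θ : ℝ) : 0 < jacobiDelta m θ :=
  sqrt_pos.2 (one_sub_mul_sin_sq_pos hm θ)

lemma jacobiDelta_sq (hm : m < 1) (θ : ℝ) : jacobiDelta m θ ^ 2 = 1 - m * sin θ ^ 2 :=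
  sq_sqrt (one_sub_mul_sin_sq_pos hm θ).le

lemma continuous_jacobiDelta (m : ℝ) : Continuous (jacobiDelta m) := by
  unfold jacobiDelta
  fun_prop

lemma hasDerivAt_jacobiDelta (hm : m < 1) (θ : ℝ) :
    HasDerivAt (jacobiDelta m) (-(m * sin θ * cos θ) / jacobiDelta m θ) θ := by
  refine ((((hasDerivAt_sin θ).fun_pow 2).const_mul m).const_sub 1).sqrt
    (one_sub_mul_sin_sq_pos hm θ).ne' |>.congr_deriv ?_
  rw [jacobiDelta]
  field_simp
  push_cast
  ring

lemma continuous_div_jacobiDelta {w : ℝ → ℝ} (hm : m < 1) (hw : Continuous w) :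
    Continuous fun x => w x / jacobiDelta m x :=
  hw.div (continuous_jacobiDelta m) fun x => (jacobiDelta_pos hm x).ne'

lemma ellipticF_zero (m : ℝ) : ellipticF m 0 = 0 := intervalIntegral.integral_same

lemma hasDerivAt_ellipticF (hm : m < 1) (θ : ℝ) :
    HasDerivAt (ellipticF m) (1 / jacobiDelta m θ) θ :=
  ((continuous_div_jacobiDelta hm continuous_const).integral_hasStrictDerivAt 0 θ).hasDerivAt

lemma ellipticF_neg (m θ : ℝ) : ellipticF m (-θ) = -ellipticF m θ := by
  rw [ellipticF, intervalIntegral.integral_symm, ellipticF, neg_inj]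
  have := intervalIntegral.integral_comp_neg (a := 0) (b := θ) fun x => 1 / jacobiDelta m x
  simpa only [jacobiDelta, sin_neg, neg_sq, neg_zero] using this.symm

lemma periodic_jacobiDelta (m : ℝ) : Function.Periodic (jacobiDelta m) (2 * π) := fun θ => by
  rw [jacobiDelta, sin_add_two_pi, jacobiDelta]

lemma periodic_one_div_jacobiDelta (m : ℝ) :
    Function.Periodic (fun θ => 1 / jacobiDelta m θ) (2 * π) := fun θ =>
  congrArg (1 / ·) (periodic_jacobiDelta m θ)

lemma ellipticF_add_two_pi (hm : m < 1) (θ : ℝ) :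
    ellipticF m (θ + 2 * π) = ellipticF m θ + ellipticF m (2 * π) := by
  simpa only [zero_add, ellipticF] using
    (periodic_one_div_jacobiDelta m).intervalIntegral_add_eq_add 0 θ
      fun _ _ => (continuous_div_jacobiDelta hm continuous_const).intervalIntegrable _ _

lemma strictMono_ellipticF (hm : m < 1) : StrictMono (ellipticF m) :=
  strictMono_of_deriv_pos fun θ => by
    rw [(hasDerivAt_ellipticF hm θ).deriv]
    exact one_div_pos.2 (jacobiDelta_pos hm θ)

lemma ellipticF_two_pi_pos (hm : m < 1) : 0 < ellipticF m (2 * π) :=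
  (ellipticF_zero m).symm.trans_lt (strictMono_ellipticF hm two_pi_pos)

lemma surjective_ellipticF (hm : m < 1) : Function.Surjective (ellipticF m) :=
  (continuous_iff_continuousAt.2 fun θ => (hasDerivAt_ellipticF hm θ).continuousAt).surjective
    ((periodic_one_div_jacobiDelta m).tendsto_atTop_intervalIntegral_of_pos
      (ellipticF_two_pi_pos hm) two_pi_pos)
    ((periodic_one_div_jacobiDelta m).tendsto_atBot_intervalIntegral_of_pos
      (ellipticF_two_pi_pos hm) two_pi_pos)

lemma analyticAt_ellipticF (hm : m < 1) (θ : ℝ) : AnalyticAt ℝ (ellipticF m) θ := by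
  refine analyticAt_of_hasDerivAt_re
    (f := fun z => (1 - m * Complex.sin z ^ 2) ^ ((-(1 / 2) : ℝ) : ℂ)) ?_
    (Eventually.of_forall fun y => (hasDerivAt_ellipticF hm y).congr_deriv ?_)
  · refine AnalyticAt.cpow (by fun_prop) analyticAt_const ?_
    rw [← Complex.ofReal_sin]
    exact_mod_cast Complex.ofReal_mem_slitPlane.2 (one_sub_mul_sin_sq_pos hm θ)
  · have hpos := one_sub_mul_sin_sq_pos hm y
    have hreal : (1 - m * Complex.sin y ^ 2) ^ ((-(1 / 2) : ℝ) : ℂ) =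
        (((1 - m * sin y ^ 2) ^ (-(1 / 2) : ℝ) : ℝ) : ℂ) := by
      rw [Complex.ofReal_cpow hpos.le]
      push_cast
      rfl
    rw [hreal, Complex.ofReal_re, rpow_neg hpos.le, ← sqrt_eq_rpow, jacobiDelta, one_div]

lemma ellipticF_jacobiAm (hm : m < 1) (t : ℝ) : ellipticF m (jacobiAm m t) = t :=
  Function.rightInverse_invFun (surjective_ellipticF hm) t

lemma jacobiAm_ellipticF (hm : m < 1) (θ : ℝ) : jacobiAm m (ellipticF m θ) = θ :=
  Function.leftInverse_invFun (strictMono_ellipticF hm).injective θ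

lemma jacobiAm_zero (hm : m < 1) : jacobiAm m 0 = 0 := by
  simpa only [ellipticF_zero] using jacobiAm_ellipticF hm 0

lemma jacobiAm_neg (hm : m < 1) (t : ℝ) : jacobiAm m (-t) = -jacobiAm m t := by
  conv_lhs => rw [← ellipticF_jacobiAm hm t, ← ellipticF_neg, jacobiAm_ellipticF hm]

lemma jacobiAm_add_ellipticF_two_pi (hm : m < 1) (t : ℝ) :
    jacobiAm m (t + ellipticF m (2 * π)) = jacobiAm m t + 2 * π := by
  conv_lhs => rw [← ellipticF_jacobiAm hm t, ← ellipticF_add_two_pi hm, jacobiAm_ellipticF hm]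

lemma analyticAt_jacobiAm (hm : m < 1) (t : ℝ) : AnalyticAt ℝ (jacobiAm m) t := by
  let e : ℝ ≃ₜ ℝ := ((strictMono_ellipticF hm).orderIsoOfSurjective _
    (surjective_ellipticF hm)).toHomeomorph
  have he : ⇑e.symm = jacobiAm m := funext fun s => by
    rw [e.symm_apply_eq]
    exact (ellipticF_jacobiAm hm s).symm
  have hF : ContDiff ℝ ⊤ e :=
    contDiff_omega_iff_analyticOnNhd.2 fun θ _ => analyticAt_ellipticF hm θ
  rw [← he]
  exact contDiff_omega_iff_analyticOnNhd.1 (e.contDiff_symm_deriv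
    (fun θ => (one_div_pos.2 (jacobiDelta_pos hm θ)).ne') (hasDerivAt_ellipticF hm) hF) t
    (mem_univ t)

lemma hasDerivAt_jacobiAm (hm : m < 1) (t : ℝ) :
    HasDerivAt (jacobiAm m) (jacobiDelta m (jacobiAm m t)) t :=
  ((hasDerivAt_ellipticF hm _).of_local_left_inverse (analyticAt_jacobiAm hm t).continuousAt
    (one_div_pos.2 (jacobiDelta_pos hm _)).ne'
    (Eventually.of_forall (ellipticF_jacobiAm hm))).congr_deriv (by rw [one_div, inv_inv])

lemma jacobiSn_zero (hm : m < 1) : jacobiSn m 0 = 0 := by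
  rw [jacobiSn, jacobiAm_zero hm, sin_zero]

lemma odd_jacobiSn (hm : m < 1) : Function.Odd (jacobiSn m) := fun t => by
  rw [jacobiSn, jacobiAm_neg hm, sin_neg, jacobiSn]

lemma periodic_jacobiSn (hm : m < 1) : Function.Periodic (jacobiSn m) (ellipticF m (2 * π)) :=
  fun t => by rw [jacobiSn, jacobiAm_add_ellipticF_two_pi hm, sin_add_two_pi, jacobiSn]

lemma analyticAt_jacobiSn (hm : m < 1) (t : ℝ) : AnalyticAt ℝ (jacobiSn m) t :=
  analyticAt_sin.comp (analyticAt_jacobiAm hm t)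

lemma hasDerivAt_jacobiSn (hm : m < 1) (t : ℝ) :
    HasDerivAt (jacobiSn m) (cos (jacobiAm m t) * jacobiDelta m (jacobiAm m t)) t :=
  (hasDerivAt_jacobiAm hm t).sin

lemma deriv_jacobiSn_zero (hm : m < 1) : deriv (jacobiSn m) 0 = 1 := by
  rw [(hasDerivAt_jacobiSn hm 0).deriv, jacobiAm_zero hm, jacobiDelta]
  simp

lemma isDuffingSolution_jacobiSn (hm : m < 1) :
    IsDuffingSolution (1 + m) (2 * m) (jacobiSn m) := by
  refine .of_hasDerivAt (hasDerivAt_jacobiSn hm) fun t => ?_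
  refine ((hasDerivAt_jacobiAm hm t).cos.mul
    ((hasDerivAt_jacobiDelta hm _).comp t (hasDerivAt_jacobiAm hm t))).congr_deriv ?_
  have hΔ := (jacobiDelta_pos hm (jacobiAm m t)).ne'
  simp only [Function.comp_apply, jacobiSn]
  field_simp
  linear_combination (-sin (jacobiAm m t)) * jacobiDelta_sq hm (jacobiAm m t)
    - m * sin (jacobiAm m t) * sin_sq_add_cos_sq (jacobiAm m t)

lemma ellipticF_two_pi_le_of_periodic_jacobiSn (hm : m < 1) {p : ℝ} (hp : 0 < p)
    (hsn : Function.Periodic (jacobiSn m) p) : ellipticF m (2 * π) ≤ p := by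
  have hsn_p : sin (jacobiAm m p) = 0 := hsn.eq.trans (jacobiSn_zero hm)
  have hcos_pos : 0 < cos (jacobiAm m p) := by
    have hderiv : deriv (jacobiSn m) p = 1 := by
      rw [← deriv_jacobiSn_zero hm, ← zero_add p, ← deriv_comp_add_const, hsn.funext]
    rw [(hasDerivAt_jacobiSn hm p).deriv] at hderiv
    exact pos_of_mul_pos_left (hderiv.symm ▸ one_pos) (jacobiDelta_pos hm _).le
  have hcos : cos (jacobiAm m p) = 1 := by
    nlinarith [sin_sq_add_cos_sq (jacobiAm m p)]
  obtain ⟨k, hk⟩ := (cos_eq_one_iff _).1 hcos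
  have ham_pos : 0 < jacobiAm m p := by
    rwa [← (strictMono_ellipticF hm).lt_iff_lt, ellipticF_zero, ellipticF_jacobiAm hm]
  have hk_pos : 0 < k := by
    rw [← hk] at ham_pos
    exact_mod_cast pos_of_mul_pos_left ham_pos two_pi_pos.le
  rw [← ellipticF_jacobiAm hm p, (strictMono_ellipticF hm).le_iff_le, ← hk]
  exact le_mul_of_one_le_left two_pi_pos.le (by exact_mod_cast hk_pos)

lemma integral_jacobiSn_sq (hm : m < 1) (θ : ℝ) :
    ∫ t in (0 : ℝ)..ellipticF m θ, jacobiSn m t ^ 2 = ellipticD m θ := by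
  have hcont : Continuous fun t => jacobiSn m t ^ 2 :=
    (isDuffingSolution_jacobiSn hm).differentiable.continuous.pow 2
  have hsubst := intervalIntegral.integral_comp_mul_deriv (a := 0) (b := θ)
    (fun x _ => hasDerivAt_ellipticF hm x)
    (continuous_div_jacobiDelta hm continuous_const).continuousOn hcont
  simp only [Function.comp_apply, jacobiSn, jacobiAm_ellipticF hm, ellipticF_zero, mul_one_div]
    at hsubst
  exact hsubst.symm

lemma continuousOn_integral_div_jacobiDelta {w : ℝ → ℝ} (hw : Continuous w) (a b : ℝ) :
    ContinuousOn (fun m => ∫ x in a..b, w x / jacobiDelta m x) (Iio 1) := by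
  rw [continuousOn_iff_continuous_domRestrict]
  refine intervalIntegral.continuous_parametric_intervalIntegral_of_continuous'
    (f := fun (m : Iio (1 : ℝ)) x => w x / jacobiDelta m x) ?_ a b
  refine Continuous.div (by fun_prop) (by unfold jacobiDelta; fun_prop) fun p => ?_
  exact (jacobiDelta_pos p.1.2 p.2).ne'

lemma cos_sq_le_jacobiDelta (hm : m ≤ 1) (θ : ℝ) :
    cos θ ^ 2 ≤ jacobiDelta m θ := by
  refine le_sqrt_of_sq_le ?_
  nlinarith [sin_sq_add_cos_sq θ, sq_nonneg (sin θ), sq_nonneg (cos θ)]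

lemma ellipticF_sub_le_ellipticD (hm : m < 1) {θ : ℝ} (hθ : 0 ≤ θ) :
    ellipticF m θ - θ ≤ ellipticD m θ := by
  have hF := (continuous_div_jacobiDelta hm (continuous_const (y := (1 : ℝ)))).intervalIntegrable
    (μ := MeasureTheory.volume) 0 θ
  have hD := (continuous_div_jacobiDelta hm (continuous_sin.pow 2)).intervalIntegrable
    (μ := MeasureTheory.volume) 0 θ
  calc ellipticF m θ - θ = ∫ x in (0 : ℝ)..θ, (1 / jacobiDelta m x - 1) := by
        rw [intervalIntegral.integral_sub hF (by simp), ellipticF]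
        simp
    _ ≤ ellipticD m θ := by
        refine intervalIntegral.integral_mono_on hθ (hF.sub (by simp)) hD fun x _ => ?_
        have hΔ := jacobiDelta_pos hm x
        rw [sub_le_iff_le_add, div_add_one hΔ.ne', div_le_div_iff_of_pos_right hΔ]
        linarith [sin_sq_add_cos_sq x, cos_sq_le_jacobiDelta hm.le x]

lemma jacobiDelta_le_pi_div_two_sub_add_sqrt (hm : m ≤ 1) {θ : ℝ} (hθ : θ ≤ π / 2) :
    jacobiDelta m θ ≤ π / 2 - θ + √(1 - m) := by
  have hη := sqrt_nonneg (1 - m)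
  have hcos : cos θ ^ 2 ≤ (π / 2 - θ) ^ 2 := by
    rw [← sin_pi_div_two_sub]
    exact sq_le_sq.2 abs_sin_le_abs
  refine sqrt_le_iff.2 ⟨by linarith, ?_⟩
  calc 1 - m * sin θ ^ 2 = cos θ ^ 2 + (1 - m) * sin θ ^ 2 := by
        linear_combination -sin_sq_add_cos_sq θ
    _ ≤ (π / 2 - θ) ^ 2 + (1 - m) * 1 := by
        gcongr
        exact sin_sq_le_one θ
    _ = (π / 2 - θ) ^ 2 + √(1 - m) ^ 2 := by rw [mul_one, sq_sqrt (by linarith)]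
    _ ≤ (π / 2 - θ + √(1 - m)) ^ 2 := by nlinarith

lemma neg_log_one_sub_le_ellipticF (hm : m < 1) :
    -(log (1 - m) / 2) ≤ ellipticF m (π / 2) := by
  set η := √(1 - m) with hη
  have hη_pos : 0 < η := sqrt_pos.2 (sub_pos.2 hm)
  have hden : ∀ x ∈ Icc 0 (π / 2), 0 < π / 2 + η - x := fun x hx => by linarith [hx.2]
  calc -(log (1 - m) / 2) = -log η := by rw [hη, log_sqrt (sub_pos.2 hm).le]
    _ ≤ log ((π / 2 + η) / η) := by
        rw [log_div (by positivity) hη_pos.ne']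
        have : 0 ≤ log (π / 2 + η) := log_nonneg (by linarith [two_le_pi])
        linarith
    _ = ∫ x in (0 : ℝ)..(π / 2), 1 / (π / 2 + η - x) := by
        rw [intervalIntegral.integral_comp_sub_left fun x => 1 / x, add_sub_cancel_left, sub_zero,
          integral_one_div_of_pos hη_pos (by positivity)]
    _ ≤ ellipticF m (π / 2) := by
        refine intervalIntegral.integral_mono_on pi_div_two_pos.le
          (ContinuousOn.intervalIntegrable_of_Icc pi_div_two_pos.le
            (continuousOn_const.div (by fun_prop) fun x hx => (hden x hx).ne'))
          ((continuous_div_jacobiDelta hm continuous_const).intervalIntegrable _ _) fun x hx => ?_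
        refine one_div_le_one_div_of_le (jacobiDelta_pos hm x) ?_
        linarith [jacobiDelta_le_pi_div_two_sub_add_sqrt hm.le hx.2]

lemma tendsto_ellipticF_atTop {θ : ℝ} (hθ : π / 2 ≤ θ) :
    Tendsto (fun m => ellipticF m θ) (𝓝[<] 1) atTop := by
  have hsub : Tendsto (fun m : ℝ => 1 - m) (𝓝[<] 1) (𝓝[>] 0) := by
    refine tendsto_nhdsWithin_iff.2 ⟨?_, ?_⟩
    · exact ((continuous_const.sub continuous_id).tendsto' 1 0 (sub_self 1)).mono_left
        nhdsWithin_le_nhds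
    · filter_upwards [self_mem_nhdsWithin] with m hm using sub_pos.2 (mem_Iio.1 hm)
  have hlog : Tendsto (fun m : ℝ => -(log (1 - m) / 2)) (𝓝[<] 1) atTop :=
    tendsto_neg_atBot_atTop.comp
      ((tendsto_log_nhdsGT_zero.comp hsub).atBot_div_const two_pos)
  refine tendsto_atTop_mono' _ ?_ hlog
  filter_upwards [self_mem_nhdsWithin] with m hm
  exact (neg_log_one_sub_le_ellipticF hm).trans ((strictMono_ellipticF hm).monotone hθ)

end Elliptic

/-- As `m` runs from `0` to `1`, the ratio `2 m ⟨sn²⟩ / (1 + m)` runs from `0` to `1`, because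
`⟨sn²⟩ = D / F` tends to `1` when the period diverges. -/
lemma exists_elliptic_parameter {lam : ℝ} (hlam : lam ∈ Ioo (0 : ℝ) 1) :
    ∃ m ∈ Ioo (0 : ℝ) 1,
      2 * m * ellipticD m (2 * π) = lam * (1 + m) * ellipticF m (2 * π) := by
  let R : ℝ → ℝ := fun m => 2 * m * ellipticD m (2 * π) - lam * (1 + m) * ellipticF m (2 * π)
  have hR_cont : ContinuousOn R (Iio 1) := by
    have hD : ContinuousOn (fun m => ellipticD m (2 * π)) (Iio 1) :=
      continuousOn_integral_div_jacobiDelta (continuous_sin.pow 2) _ _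
    have hF : ContinuousOn (fun m => ellipticF m (2 * π)) (Iio 1) :=
      continuousOn_integral_div_jacobiDelta continuous_const _ _
    fun_prop
  have hR_zero : R 0 < 0 := by
    have := mul_pos hlam.1 (ellipticF_two_pi_pos zero_lt_one)
    simp only [R]
    linarith
  have hR_lower : Tendsto
      (fun m => (2 * m - lam * (1 + m)) * ellipticF m (2 * π) - 2 * m * (2 * π))
      (𝓝[<] 1) atTop := by
    have hcoeff : Tendsto (fun m => 2 * m - lam * (1 + m)) (𝓝[<] 1) (𝓝 (2 * (1 - lam))) :=
      (Continuous.tendsto' (by fun_prop) _ _ (by ring)).mono_left nhdsWithin_le_nhds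
    have hbounded : Tendsto (fun m : ℝ => -(2 * m * (2 * π))) (𝓝[<] 1) (𝓝 (-(2 * 1 * (2 * π)))) :=
      (Continuous.tendsto (by fun_prop) _).mono_left nhdsWithin_le_nhds
    exact (hcoeff.pos_mul_atTop (by linarith [hlam.2])
      (tendsto_ellipticF_atTop (by linarith [pi_pos]))).atTop_add hbounded
  obtain ⟨M, hR_pos, hM₀, hM⟩ : ∃ M, 0 < R M ∧ 0 < M ∧ M < 1 := by
    refine Eventually.exists (f := 𝓝[<] (1 : ℝ)) ?_
    filter_upwards [hR_lower.eventually_gt_atTop 0, Ioo_mem_nhdsLT one_pos] with m hpos hm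
    refine ⟨hpos.trans_le ?_, hm⟩
    simp only [R]
    nlinarith [ellipticF_sub_le_ellipticD hm.2 two_pi_pos.le, hm.1]
  obtain ⟨m, hm, hRm⟩ := intermediate_value_Ioo hM₀.le
    (hR_cont.mono fun _ hx => hx.2.trans_lt hM) ⟨hR_zero, hR_pos⟩
  exact ⟨m, ⟨hm.1, hm.2.trans hM⟩, sub_eq_zero.1 hRm⟩

/-- The Jacobi elliptic sine of amplitude `V`, rescaled in time to have period `2π`. -/
noncomputable def snWave (V m t : ℝ) : ℝ := V * jacobiSn m (ellipticF m (2 * π) / (2 * π) * t)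

lemma IsDuffingSolution.rescale {a lam lam' V Ω : ℝ} {g : ℝ → ℝ} (hg : IsDuffingSolution a lam g)
    (hlam : lam' * V ^ 2 = Ω ^ 2 * lam) :
    IsDuffingSolution (Ω ^ 2 * a) lam' (fun t => V * g (Ω * t)) := by
  have hΩ : ∀ t, HasDerivAt (fun t => Ω * t) Ω t := fun t => hasDerivAt_const_mul Ω
  refine .of_hasDerivAt (fun t => ((hg.hasDerivAt _).comp t (hΩ t)).const_mul V) fun t => ?_
  refine ((((hg.hasDerivAt_deriv _).comp t (hΩ t)).mul_const Ω).const_mul V).congr_deriv ?_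
  linear_combination (-V * g (Ω * t) ^ 3) * hlam

section snWave

variable {V m : ℝ}

lemma analyticAt_snWave (V : ℝ) (hm : m < 1) (t : ℝ) : AnalyticAt ℝ (snWave V m) t :=
  analyticAt_const.mul ((analyticAt_jacobiSn hm _).comp (analyticAt_const.mul analyticAt_id))

lemma odd_snWave (V : ℝ) (hm : m < 1) : Function.Odd (snWave V m) := fun t => by
  rw [snWave, mul_neg, odd_jacobiSn hm, mul_neg, snWave]

lemma periodic_snWave (V : ℝ) (hm : m < 1) : Function.Periodic (snWave V m) (2 * π) := fun t => by
  rw [snWave, mul_add, div_mul_cancel₀ _ two_pi_pos.ne', periodic_jacobiSn hm, snWave]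

lemma two_pi_le_of_periodic_snWave (hV : V ≠ 0) (hm : m < 1) {p : ℝ} (hp : 0 < p)
    (hper : Function.Periodic (snWave V m) p) : 2 * π ≤ p := by
  have hΩ : 0 < ellipticF m (2 * π) / (2 * π) := div_pos (ellipticF_two_pi_pos hm) two_pi_pos
  have hsn : Function.Periodic (jacobiSn m) (ellipticF m (2 * π) / (2 * π) * p) := fun s => by
    have := mul_left_cancel₀ hV (hper (s / (ellipticF m (2 * π) / (2 * π))))
    rwa [mul_add, mul_div_cancel₀ _ hΩ.ne'] at this
  have hle := ellipticF_two_pi_le_of_periodic_jacobiSn hm (mul_pos hΩ hp) hsn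
  rw [div_mul_eq_mul_div, le_div_iff₀ two_pi_pos] at hle
  exact le_of_mul_le_mul_left hle (ellipticF_two_pi_pos hm)

lemma deriv_snWave_zero (V : ℝ) (hm : m < 1) :
    deriv (snWave V m) 0 = V * (ellipticF m (2 * π) / (2 * π)) := by
  unfold snWave
  rw [deriv_const_mul_field, deriv_comp_mul_left, mul_zero, deriv_jacobiSn_zero hm, smul_eq_mul,
    mul_one]

lemma avg_snWave_sq (V : ℝ) (hm : m < 1) :
    avg (fun t => snWave V m t ^ 2) = V ^ 2 * (ellipticD m (2 * π) / ellipticF m (2 * π)) := by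
  have hF := (ellipticF_two_pi_pos hm).ne'
  simp only [snWave, mul_pow]
  rw [avg_const_mul, avg, intervalIntegral.integral_comp_mul_left (fun t => jacobiSn m t ^ 2)
    (div_ne_zero hF two_pi_pos.ne'), mul_zero, div_mul_cancel₀ _ two_pi_pos.ne',
    integral_jacobiSn_sq hm, smul_eq_mul]
  field_simp

end snWave

lemma exists_snWave_isDuffingSolution {lam : ℝ} (hlam : lam ∈ Ioo (0 : ℝ) 1) :
    ∃ V m : ℝ, V ≠ 0 ∧ m < 1 ∧
      IsDuffingSolution (avg fun s => snWave V m s ^ 2) lam (snWave V m) ∧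
      2 * lam * deriv (snWave V m) 0 ^ 2 < (avg fun s => snWave V m s ^ 2) ^ 2 := by
  obtain ⟨m, ⟨hm₀, hm⟩, hDF⟩ := exists_elliptic_parameter hlam
  have hlam₀ : 0 < lam := hlam.1
  have hF : 0 < ellipticF m (2 * π) := ellipticF_two_pi_pos hm
  set Ω := ellipticF m (2 * π) / (2 * π) with hΩ_def
  have hΩ : 0 < Ω := div_pos hF two_pi_pos
  set V := √(2 * m * Ω ^ 2 / lam) with hV_def
  have hV : 0 < V := by positivity
  have hV_sq : lam * V ^ 2 = Ω ^ 2 * (2 * m) := by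
    rw [hV_def, sq_sqrt (by positivity)]
    field_simp
  have havg : avg (fun s => snWave V m s ^ 2) = Ω ^ 2 * (1 + m) := by
    rw [avg_snWave_sq V hm, mul_div_assoc', div_eq_iff hF.ne']
    refine mul_left_cancel₀ hlam₀.ne' ?_
    linear_combination ellipticD m (2 * π) * hV_sq + Ω ^ 2 * hDF
  refine ⟨V, m, hV.ne', hm, ?_, ?_⟩
  · rw [havg]
    exact (isDuffingSolution_jacobiSn hm).rescale hV_sq
  · have hgap : 0 < (Ω ^ 2) ^ 2 * (1 - m) ^ 2 := by
      have := sub_pos.2 hm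
      positivity
    rw [havg, deriv_snWave_zero V hm, ← hΩ_def]
    linear_combination hgap + 2 * Ω ^ 2 * hV_sq

theorem stmt_12 (lam : ℝ) (hlam : lam ∈ Set.Ioo (0 : ℝ) 1) :
    ∃ g : ℝ → ℝ,
      (∀ t : ℝ, AnalyticAt ℝ g t) ∧
      (∀ t : ℝ, g (-t) = -g t) ∧
      Function.Periodic g (2 * π) ∧
      (∀ p : ℝ, 0 < p → Function.Periodic g p → 2 * π ≤ p) ∧
      g ≠ 0 ∧
      (∀ t : ℝ, deriv (deriv g) t + avg (fun s => g s ^ 2) * g t - lam * g t ^ 3 = 0) ∧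
      (∀ h : ℝ → ℝ, ContDiff ℝ 2 h → (∀ t : ℝ, h (-t) = -h t) →
        Function.Periodic h (2 * π) →
        (∀ t : ℝ, deriv (deriv h) t + (avg (fun s => g s ^ 2) - 3 * lam * g t ^ 2) * h t
            = -(2 * avg (fun s => g s * h s)) * g t) →
        h = 0) := by
  obtain ⟨V, m, hV, hm, hg, hsep⟩ := exists_snWave_isDuffingSolution hlam
  have hg₀ : snWave V m 0 = 0 := (odd_snWave V hm).map_zero
  have hg'₀ : deriv (snWave V m) 0 ≠ 0 := by
    rw [deriv_snWave_zero V hm]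
    exact mul_ne_zero hV (div_pos (ellipticF_two_pi_pos hm) two_pi_pos).ne'
  refine ⟨snWave V m, analyticAt_snWave V hm, odd_snWave V hm, periodic_snWave V hm,
    fun p => two_pi_le_of_periodic_snWave hV hm, fun h => hg'₀ (by simp [h]), fun t => ?_,
    fun h hh hodd hper heq => ?_⟩
  · rw [(hg.hasDerivAt_deriv t).deriv]
    ring
  · rw [hg.sq_deriv_eq_duffingEnergy hg₀ 0] at hsep
    have hE := hg.sq_deriv_eq_duffingEnergy hg₀ 0 ▸ pow_ne_zero 2 hg'₀
    have hh₀ : h 0 = 0 := Function.Odd.map_zero hodd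
    exact hg.eq_zero_of_linearization hlam.1 hg₀ ((periodic_snWave V hm).eq.trans hg₀) hE hsep
      (.of_contDiff hh fun t => by rw [← heq t, duffingPotential]) hh₀ (hper.eq.trans hh₀)
end

section
/- Define φ : (−∞, 1) → ℝ by φ(m) := (K(m) − E(m))/(m K(m)) for m ≠ 0 and φ(0) := 1/2. Then φ is continuous and differentiable on (−∞, 1), strictly increasing, and satisfies lim_{m → −∞} φ(m) = 0 and lim_{m → 1⁻} φ(m) = 1. -/
open Real Filter

/-- Complete elliptic integral of the first kind (parameter `m`). -/
noncomputable def Kc (m : ℝ) : ℝ := ∫ θ in (0:ℝ)..(π / 2), 1 / Real.sqrt (1 - m * Real.sin θ ^ 2)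

/-- Complete elliptic integral of the second kind (parameter `m`). -/
noncomputable def Ec (m : ℝ) : ℝ := ∫ θ in (0:ℝ)..(π / 2), Real.sqrt (1 - m * Real.sin θ ^ 2)

/-- `φ(m) = (K(m) − E(m))/(m K(m))`, extended by `φ(0) = 1/2`. -/
noncomputable def phiFun (m : ℝ) : ℝ :=
  if m = 0 then 1 / 2 else (Kc m - Ec m) / (m * Kc m)

/-!
`φ(m)` is the mean of `sin² θ` over `[0, π / 2]` for the probability density proportional to
`(1 - m sin² θ)^(-1/2)`. For `a < b < 1` the ratio of the density with parameter `b` to the one with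
parameter `a` increases with `sin² θ`, so the mean increases. As `m → 1⁻` the integral of
`cos² θ (1 - m sin² θ)^(-1/2)` stays bounded while `K(m) → ∞`, so the mean of `cos² θ` tends to `0`.
The reflection `θ ↦ π / 2 - θ` carries the density with parameter `m` to the one with parameter
`m / (m - 1)`, whence `φ(m) + φ(m / (m - 1)) = 1`, and the limit at `-∞` is read off from the one
at `1`.
-/

open MeasureTheory intervalIntegral Set Topology Interval

section IntervalIntegral

theorem hasDerivAt_intervalIntegral_of_continuousOn_deriv {𝕜 E : Type*} [RCLike 𝕜]
    [NormedAddCommGroup E] [NormedSpace ℝ E] [NormedSpace 𝕜 E] {μ : Measure ℝ}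
    [IsLocallyFiniteMeasure μ] {a b : ℝ} {F F' : 𝕜 → ℝ → E} {U : Set 𝕜} {x₀ : 𝕜} (hU : U ∈ 𝓝 x₀)
    (hF : ∀ x ∈ U, ContinuousOn (F x) [[a, b]])
    (hF' : ContinuousOn (fun p : 𝕜 × ℝ => F' p.1 p.2) (U ×ˢ [[a, b]]))
    (hderiv : ∀ x ∈ U, ∀ t ∈ [[a, b]], HasDerivAt (F · t) (F' x t) x) :
    HasDerivAt (fun x => ∫ t in a..b, F x t ∂μ) (∫ t in a..b, F' x₀ t ∂μ) x₀ := by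
  obtain ⟨V, hV, hVU, hVc⟩ := local_compact_nhds hU
  obtain ⟨C, hC⟩ := (hVc.prod isCompact_uIcc).exists_bound_of_continuousOn
    (hF'.mono (prod_mono_left hVU))
  have hF'₀ : ContinuousOn (F' x₀) [[a, b]] :=
    hF'.comp (f := fun t => (x₀, t)) (by fun_prop) fun _ ht => ⟨mem_of_mem_nhds hU, ht⟩
  refine (hasDerivAt_integral_of_dominated_loc_of_deriv_le (bound := fun _ => C) hV ?_
    (hF x₀ (mem_of_mem_nhds hU)).intervalIntegrable
    hF'₀.intervalIntegrable.aestronglyMeasurable_restrict_uIoc ?_ intervalIntegrable_const ?_).2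
  · filter_upwards [hU] with x hx
    exact (hF x hx).intervalIntegrable.aestronglyMeasurable_restrict_uIoc
  · exact ae_of_all _ fun t ht x hx => hC (x, t) ⟨hx, uIoc_subset_uIcc ht⟩
  · exact ae_of_all _ fun t ht x hx => hderiv x (hVU hx) t (uIoc_subset_uIcc ht)

variable {f u v : ℝ → ℝ} {a b : ℝ}

theorem mul_integral_sub_mul_lt_of_strictMonoOn {ξ : ℝ} (hab : a < b)
    (hf : ContinuousOn f (Icc a b)) (hu : ContinuousOn u (Icc a b)) (hv : ContinuousOn v (Icc a b))
    (hu_pos : ∀ x ∈ Icc a b, 0 < u x) (hf_mono : StrictMonoOn f (Icc a b))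
    (hratio : StrictMonoOn (fun x => v x / u x) (Icc a b)) (hξ : ξ ∈ Icc a b) :
    v ξ / u ξ * ∫ x in a..b, (f x - f ξ) * u x < ∫ x in a..b, (f x - f ξ) * v x := by
  have hlt : ∀ x ∈ Icc a b, x ≠ ξ → v ξ / u ξ * ((f x - f ξ) * u x) < (f x - f ξ) * v x := by
    intro x hx hne
    have hprod : 0 < (f x - f ξ) * (v x / u x - v ξ / u ξ) := by
      rcases hne.lt_or_gt with h | h
      · exact mul_pos_of_neg_of_neg (sub_neg.2 (hf_mono hx hξ h)) (sub_neg.2 (hratio hx hξ h))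
      · exact mul_pos (sub_pos.2 (hf_mono hξ hx h)) (sub_pos.2 (hratio hξ hx h))
    calc v ξ / u ξ * ((f x - f ξ) * u x)
        < v ξ / u ξ * ((f x - f ξ) * u x) + (f x - f ξ) * (v x / u x - v ξ / u ξ) * u x :=
          lt_add_of_pos_right _ (mul_pos hprod (hu_pos x hx))
      _ = (f x - f ξ) * (v x / u x * u x) := by ring
      _ = (f x - f ξ) * v x := by rw [div_mul_cancel₀ _ (hu_pos x hx).ne']
  rw [← intervalIntegral.integral_const_mul]
  refine integral_lt_integral_of_continuousOn_of_le_of_exists_lt hab (by fun_prop) (by fun_prop)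
    (fun x hx => ?_) ?_
  · rcases eq_or_ne x ξ with rfl | hne
    · simp
    · exact (hlt x (Ioc_subset_Icc_self hx) hne).le
  · rcases eq_or_ne a ξ with rfl | hne
    · exact ⟨b, right_mem_Icc.2 hab.le, hlt b (right_mem_Icc.2 hab.le) hab.ne'⟩
    · exact ⟨a, left_mem_Icc.2 hab.le, hlt a (left_mem_Icc.2 hab.le) hne⟩

theorem integral_mul_div_integral_lt_of_strictMonoOn (hab : a < b)
    (hf : ContinuousOn f (Icc a b)) (hu : ContinuousOn u (Icc a b)) (hv : ContinuousOn v (Icc a b))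
    (hu_pos : ∀ x ∈ Icc a b, 0 < u x) (hv_pos : ∀ x ∈ Icc a b, 0 < v x)
    (hf_mono : StrictMonoOn f (Icc a b)) (hratio : StrictMonoOn (fun x => v x / u x) (Icc a b)) :
    (∫ x in a..b, f x * u x) / (∫ x in a..b, u x) <
      (∫ x in a..b, f x * v x) / (∫ x in a..b, v x) := by
  have integral_pos_of_pos {w : ℝ → ℝ} (hw : ContinuousOn w (Icc a b))
      (hw_pos : ∀ x ∈ Icc a b, 0 < w x) : 0 < ∫ x in a..b, w x :=
    intervalIntegral_pos_of_pos_on (hw.intervalIntegrable_of_Icc hab.le)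
      (fun x hx => hw_pos x (Ioo_subset_Icc_self hx)) hab
  have integral_sub_mul {w : ℝ → ℝ} (hw : ContinuousOn w (Icc a b)) (c : ℝ) :
      ∫ x in a..b, (f x - c) * w x = (∫ x in a..b, f x * w x) - c * ∫ x in a..b, w x := by
    rw [← intervalIntegral.integral_const_mul, ← integral_sub
      ((hf.fun_mul hw).intervalIntegrable_of_Icc hab.le)
      ((hw.intervalIntegrable_of_Icc hab.le).const_mul c)]
    simp only [sub_mul]
  -- Centring `f` at its `u`-mean, which is a value `f ξ`, makes the `u`-integral vanish.
  obtain ⟨ξ, hξ, hmean⟩ : ∃ ξ ∈ Icc a b, ∫ x in a..b, f x * u x = f ξ * ∫ x in a..b, u x := by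
    rw [← uIcc_of_le hab.le] at hf ⊢
    refine exists_eq_const_mul_intervalIntegral_of_nonneg hf
      (hu.intervalIntegrable_of_Icc hab.le) fun x hx => (hu_pos x ?_).le
    exact Ioc_subset_Icc_self (uIoc_of_le hab.le ▸ hx)
  have hlt := mul_integral_sub_mul_lt_of_strictMonoOn hab hf hu hv hu_pos hf_mono hratio hξ
  rw [integral_sub_mul hu, integral_sub_mul hv, hmean, sub_self, mul_zero, sub_pos] at hlt
  rwa [hmean, mul_div_cancel_right₀ _ (integral_pos_of_pos hu hu_pos).ne',
    lt_div_iff₀ (integral_pos_of_pos hv hv_pos)]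

theorem integral_one_div_sqrt_sq_add_sq (a b : ℝ) {c : ℝ} (hc : 0 < c) :
    ∫ x in a..b, 1 / √(c ^ 2 + x ^ 2) = arsinh (b / c) - arsinh (a / c) := by
  have hderiv (x : ℝ) : HasDerivAt (fun x => arsinh (x / c)) (1 / √(c ^ 2 + x ^ 2)) x := by
    have hsqrt : √(c ^ 2 + x ^ 2) = c * √(1 + (x / c) ^ 2) := by
      rw [← sqrt_sq hc.le, ← sqrt_mul (by positivity), sqrt_sq hc.le]
      congr 1
      field_simp
    refine ((hasDerivAt_id x).div_const c).arsinh.congr_deriv ?_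
    rw [hsqrt, smul_eq_mul, id]
    field_simp
  refine integral_eq_sub_of_hasDerivAt (fun x _ => hderiv x) (Continuous.intervalIntegrable ?_ _ _)
  exact continuous_const.div (by fun_prop) fun x => by positivity

end IntervalIntegral

section RealFunctions

theorem one_sub_mul_pos {m x : ℝ} (hm : m < 1) (hx : x ∈ Icc 0 1) : 0 < 1 - m * x := by
  nlinarith [mul_nonneg (sub_nonneg.2 hm.le) hx.1, hx.2]

theorem strictMonoOn_one_sub_mul_div_one_sub_mul {a b : ℝ} (hab : a < b) (hb : b < 1) :
    StrictMonoOn (fun x => (1 - a * x) / (1 - b * x)) (Icc 0 1) := by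
  intro x hx y hy hxy
  rw [div_lt_div_iff₀ (one_sub_mul_pos hb hx) (one_sub_mul_pos hb hy)]
  linarith [mul_pos (sub_pos.2 hab) (sub_pos.2 hxy)]

theorem sin_sq_mem_Icc (θ : ℝ) : sin θ ^ 2 ∈ Icc 0 1 :=
  ⟨sq_nonneg _, sin_sq_le_one θ⟩

theorem strictMonoOn_sin_sq : StrictMonoOn (fun θ => sin θ ^ 2) (Icc 0 (π / 2)) := by
  intro x hx y hy hxy
  exact pow_lt_pow_left₀ (sin_lt_sin_of_lt_of_le_pi_div_two (by linarith [hx.1, pi_pos]) hy.2 hxy)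
    (sin_nonneg_of_nonneg_of_le_pi hx.1 (by linarith [hx.2, pi_pos])) two_ne_zero

theorem tendsto_div_sub_one_atBot : Tendsto (fun m : ℝ => m / (m - 1)) atBot (𝓝[<] 1) := by
  have heq : (fun m : ℝ => 1 + (m - 1)⁻¹) =ᶠ[atBot] fun m => m / (m - 1) := by
    filter_upwards [eventually_lt_atBot 1] with m hm
    have : m - 1 ≠ 0 := by linarith
    field_simp
    ring
  refine Tendsto.congr' heq (tendsto_nhdsWithin_iff.2 ⟨?_, ?_⟩)
  · simpa [sub_eq_add_neg] using (tendsto_inv_atBot_zero.comp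
      (tendsto_atBot_add_const_right atBot (-1 : ℝ) tendsto_id)).const_add 1
  · filter_upwards [eventually_lt_atBot 1] with m hm
    simpa using hm

end RealFunctions

section WeightedKc

/-- The integral `∫₀^{π/2} g(θ) (1 - m sin² θ)^(-1/2) dθ`, that is, `K(m)` with an additional
weight `g`. Up to the factor `K(m)` it is the mean of `g` under the density proportional to
`(1 - m sin² θ)^(-1/2)`. -/
noncomputable def weightedKc (g : ℝ → ℝ) (m : ℝ) : ℝ :=
  ∫ θ in (0 : ℝ)..(π / 2), g θ / √(1 - m * sin θ ^ 2)

variable {g h : ℝ → ℝ} {m : ℝ}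

theorem Kc_eq_weightedKc_one (m : ℝ) : Kc m = weightedKc (fun _ => 1) m := rfl

theorem sqrt_one_sub_mul_sin_sq_pos (hm : m < 1) (θ : ℝ) : 0 < √(1 - m * sin θ ^ 2) :=
  sqrt_pos.2 (one_sub_mul_pos hm (sin_sq_mem_Icc θ))

theorem continuousOn_div_sqrt_one_sub_mul_sin_sq {s : Set ℝ} (hg : ContinuousOn g s) (hm : m < 1) :
    ContinuousOn (fun θ => g θ / √(1 - m * sin θ ^ 2)) s :=
  hg.div (by fun_prop) fun θ _ => (sqrt_one_sub_mul_sin_sq_pos hm θ).ne'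

theorem weightedKc_nonneg (hg : ∀ θ ∈ Icc 0 (π / 2), 0 ≤ g θ) : 0 ≤ weightedKc g m :=
  integral_nonneg (by positivity) fun θ hθ => div_nonneg (hg θ hθ) (sqrt_nonneg _)

theorem weightedKc_const_mul (c : ℝ) (g : ℝ → ℝ) (m : ℝ) :
    weightedKc (fun θ => c * g θ) m = c * weightedKc g m := by
  simp only [weightedKc, mul_div_assoc, intervalIntegral.integral_const_mul]

theorem weightedKc_add (hg : ContinuousOn g [[0, π / 2]]) (hh : ContinuousOn h [[0, π / 2]])
    (hm : m < 1) :
    weightedKc (fun θ => g θ + h θ) m = weightedKc g m + weightedKc h m := by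
  simp only [weightedKc, add_div]
  exact integral_add (continuousOn_div_sqrt_one_sub_mul_sin_sq hg hm).intervalIntegrable
    (continuousOn_div_sqrt_one_sub_mul_sin_sq hh hm).intervalIntegrable

theorem hasDerivAt_weightedKc (hg : ContinuousOn g [[0, π / 2]]) (hm : m < 1) :
    HasDerivAt (weightedKc g)
      (∫ θ in (0 : ℝ)..(π / 2), g θ * sin θ ^ 2 / (2 * √(1 - m * sin θ ^ 2) ^ 3)) m := by
  refine hasDerivAt_intervalIntegral_of_continuousOn_deriv (Iio_mem_nhds hm)
    (F' := fun x θ => g θ * sin θ ^ 2 / (2 * √(1 - x * sin θ ^ 2) ^ 3))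
    (fun x hx => continuousOn_div_sqrt_one_sub_mul_sin_sq hg hx) ?_ ?_
  · have hg_snd : ContinuousOn (fun p : ℝ × ℝ => g p.2) (Iio 1 ×ˢ [[0, π / 2]]) :=
      hg.comp continuousOn_snd fun _ hp => hp.2
    refine (hg_snd.mul (by fun_prop)).div (by fun_prop) fun p hp => ?_
    have := sqrt_one_sub_mul_sin_sq_pos hp.1 p.2
    positivity
  · intro x hx θ _
    have hpos := sqrt_one_sub_mul_sin_sq_pos hx θ
    have hradicand : HasDerivAt (fun x => 1 - x * sin θ ^ 2) (-(1 * sin θ ^ 2)) x :=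
      ((hasDerivAt_id x).mul_const _).const_sub 1
    refine ((hasDerivAt_const x (g θ)).fun_div (hradicand.sqrt (sqrt_pos.1 hpos).ne')
      hpos.ne').congr_deriv ?_
    field_simp
    ring

theorem weightedKc_eq_integral_cos (g : ℝ → ℝ) (m : ℝ) :
    weightedKc g m = ∫ θ in (0 : ℝ)..(π / 2), g (π / 2 - θ) / √(1 - m * cos θ ^ 2) := by
  simp only [← sin_pi_div_two_sub]
  rw [integral_comp_sub_left (fun θ => g θ / √(1 - m * sin θ ^ 2)), sub_self, sub_zero, weightedKc]

theorem weightedKc_eq_weightedKc_div_sub_one (g : ℝ → ℝ) (hm : m < 1) :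
    weightedKc g m = (√(1 - m))⁻¹ * weightedKc (fun θ => g (π / 2 - θ)) (m / (m - 1)) := by
  rw [weightedKc_eq_integral_cos, weightedKc, ← intervalIntegral.integral_const_mul]
  refine integral_congr fun θ _ => ?_
  have hradicand : 1 - m * cos θ ^ 2 = (1 - m) * (1 - m / (m - 1) * sin θ ^ 2) := by
    have : m - 1 ≠ 0 := by linarith
    rw [cos_sq']
    field_simp
    ring
  simp only [hradicand, sqrt_mul (sub_pos.2 hm).le]
  ring

theorem Kc_pos (hm : m < 1) : 0 < Kc m :=
  intervalIntegral_pos_of_pos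
    (continuousOn_div_sqrt_one_sub_mul_sin_sq continuousOn_const hm).intervalIntegrable
    (fun θ => one_div_pos.2 (sqrt_one_sub_mul_sin_sq_pos hm θ)) (by positivity)

theorem weightedKc_sin_sq_add_weightedKc_cos_sq (hm : m < 1) :
    weightedKc (fun θ => sin θ ^ 2) m + weightedKc (fun θ => cos θ ^ 2) m = Kc m := by
  rw [← weightedKc_add (by fun_prop) (by fun_prop) hm, Kc_eq_weightedKc_one]
  simp only [sin_sq_add_cos_sq]

theorem Ec_eq_weightedKc (m : ℝ) : Ec m = weightedKc (fun θ => 1 - m * sin θ ^ 2) m := by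
  simp only [Ec, weightedKc, div_sqrt]

theorem Kc_sub_Ec (hm : m < 1) : Kc m - Ec m = m * weightedKc (fun θ => sin θ ^ 2) m := by
  rw [sub_eq_iff_eq_add, Ec_eq_weightedKc, ← weightedKc_const_mul,
    ← weightedKc_add (by fun_prop) (by fun_prop) hm, Kc_eq_weightedKc_one]
  simp only [add_sub_cancel]

end WeightedKc

section Phi

variable {m : ℝ}

theorem phiFun_eq_weightedKc_div_Kc (hm : m < 1) :
    phiFun m = weightedKc (fun θ => sin θ ^ 2) m / Kc m := by
  rcases eq_or_ne m 0 with rfl | h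
  · have hK : Kc 0 = π / 2 := by simp [Kc]
    have hsin : weightedKc (fun θ => sin θ ^ 2) 0 = π / 2 / 2 := by
      simp [weightedKc, integral_sin_sq]
    rw [hK, hsin, phiFun, if_pos rfl]
    field_simp
  · rw [phiFun, if_neg h, Kc_sub_Ec hm, mul_div_mul_left _ _ h]

theorem one_sub_phiFun (hm : m < 1) :
    1 - phiFun m = weightedKc (fun θ => cos θ ^ 2) m / Kc m := by
  rw [phiFun_eq_weightedKc_div_Kc hm, one_sub_div (Kc_pos hm).ne',
    ← weightedKc_sin_sq_add_weightedKc_cos_sq hm, add_sub_cancel_left]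

theorem differentiableOn_phiFun : DifferentiableOn ℝ phiFun (Iio 1) := by
  have hratio : DifferentiableOn ℝ (fun m => weightedKc (fun θ => sin θ ^ 2) m / Kc m) (Iio 1) :=
    fun m hm => ((hasDerivAt_weightedKc (by fun_prop) hm).differentiableAt.fun_div
      (hasDerivAt_weightedKc continuousOn_const hm).differentiableAt
      (Kc_pos hm).ne').differentiableWithinAt
  exact hratio.congr fun m hm => phiFun_eq_weightedKc_div_Kc hm

theorem strictMonoOn_phiFun : StrictMonoOn phiFun (Iio 1) := by
  intro a ha b hb hab
  have hratio_eq (θ : ℝ) : 1 / √(1 - b * sin θ ^ 2) / (1 / √(1 - a * sin θ ^ 2)) =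
      √((1 - a * sin θ ^ 2) / (1 - b * sin θ ^ 2)) := by
    rw [sqrt_div (one_sub_mul_pos ha (sin_sq_mem_Icc θ)).le, one_div, one_div, inv_div_inv]
  have hratio : StrictMonoOn
      (fun θ => 1 / √(1 - b * sin θ ^ 2) / (1 / √(1 - a * sin θ ^ 2))) (Icc 0 (π / 2)) := by
    intro x hx y hy hxy
    simp only [hratio_eq]
    refine sqrt_lt_sqrt ?_ (strictMonoOn_one_sub_mul_div_one_sub_mul hab hb (sin_sq_mem_Icc x)
      (sin_sq_mem_Icc y) (strictMonoOn_sin_sq hx hy hxy))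
    exact div_nonneg (one_sub_mul_pos ha (sin_sq_mem_Icc x)).le
      (one_sub_mul_pos hb (sin_sq_mem_Icc x)).le
  have hcont {m : ℝ} (hm : m < 1) :
      ContinuousOn (fun θ => 1 / √(1 - m * sin θ ^ 2)) (Icc 0 (π / 2)) :=
    continuousOn_div_sqrt_one_sub_mul_sin_sq continuousOn_const hm
  have hpos {m : ℝ} (hm : m < 1) (θ : ℝ) : 0 < 1 / √(1 - m * sin θ ^ 2) :=
    one_div_pos.2 (sqrt_one_sub_mul_sin_sq_pos hm θ)
  rw [phiFun_eq_weightedKc_div_Kc ha, phiFun_eq_weightedKc_div_Kc hb]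
  simpa only [mul_one_div, weightedKc, Kc] using integral_mul_div_integral_lt_of_strictMonoOn
    (by positivity) (by fun_prop) (hcont ha) (hcont hb) (fun θ _ => hpos ha θ)
    (fun θ _ => hpos hb θ) strictMonoOn_sin_sq hratio

theorem phiFun_add_phiFun_div_sub_one (hm : m < 1) : phiFun m + phiFun (m / (m - 1)) = 1 := by
  have hm' : m / (m - 1) < 1 := by
    rw [div_lt_one_of_neg (sub_neg.2 hm)]
    linarith
  have hsqrt : (√(1 - m))⁻¹ ≠ 0 := (inv_pos.2 (sqrt_pos.2 (sub_pos.2 hm))).ne'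
  rw [← eq_sub_iff_add_eq, one_sub_phiFun hm', phiFun_eq_weightedKc_div_Kc hm,
    Kc_eq_weightedKc_one, weightedKc_eq_weightedKc_div_sub_one _ hm,
    weightedKc_eq_weightedKc_div_sub_one _ hm, mul_div_mul_left _ _ hsqrt, Kc_eq_weightedKc_one]
  simp only [sin_pi_div_two_sub]

end Phi

section Limits

variable {m : ℝ}

theorem arsinh_le_Kc (hm : m < 1) : arsinh (π / 2 / √(1 - m)) ≤ Kc m := by
  have hs : 0 < √(1 - m) := sqrt_pos.2 (sub_pos.2 hm)
  have hcos (θ : ℝ) : 0 < √(1 - m * cos θ ^ 2) :=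
    sqrt_pos.2 (one_sub_mul_pos hm ⟨sq_nonneg _, cos_sq_le_one θ⟩)
  have hlhs := integral_one_div_sqrt_sq_add_sq 0 (π / 2) hs
  rw [zero_div, arsinh_zero, sub_zero] at hlhs
  rw [← hlhs, Kc_eq_weightedKc_one, weightedKc_eq_integral_cos]
  refine integral_mono_on (by positivity) (Continuous.intervalIntegrable ?_ _ _)
    (Continuous.intervalIntegrable ?_ _ _) fun θ _ => ?_
  · exact continuous_const.div (by fun_prop) fun θ => by positivity
  · exact continuous_const.div (by fun_prop) fun θ => (hcos θ).ne'
  · refine one_div_le_one_div_of_le (hcos θ) (sqrt_le_sqrt ?_)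
    calc 1 - m * cos θ ^ 2 = (1 - m) * cos θ ^ 2 + sin θ ^ 2 := by rw [sin_sq]; ring
      _ ≤ (1 - m) * 1 + θ ^ 2 := by
        refine add_le_add (mul_le_mul_of_nonneg_left (cos_sq_le_one θ) (sub_pos.2 hm).le) ?_
        exact sq_le_sq.2 abs_sin_le_abs
      _ = √(1 - m) ^ 2 + θ ^ 2 := by rw [mul_one, sq_sqrt (sub_pos.2 hm).le]

theorem tendsto_Kc_nhdsLT_one : Tendsto Kc (𝓝[<] 1) atTop := by
  have hsqrt : Tendsto (fun m : ℝ => √(1 - m)) (𝓝[<] 1) (𝓝[>] 0) := by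
    refine tendsto_nhdsWithin_iff.2 ⟨?_, ?_⟩
    · have hcont : Continuous fun m : ℝ => √(1 - m) := by fun_prop
      simpa using (hcont.tendsto 1).mono_left nhdsWithin_le_nhds
    · filter_upwards [self_mem_nhdsWithin] with m hm using sqrt_pos.2 (sub_pos.2 hm)
  have harsinh : Tendsto (fun m => arsinh (π / 2 / √(1 - m))) (𝓝[<] 1) atTop :=
    sinhOrderIso.symm.tendsto_atTop.comp
      ((tendsto_inv_nhdsGT_zero.comp hsqrt).const_mul_atTop (by positivity : 0 < π / 2))
  refine tendsto_atTop_mono' _ ?_ harsinh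
  filter_upwards [self_mem_nhdsWithin] with m hm using arsinh_le_Kc hm

theorem weightedKc_cos_sq_le (hm : m < 1) : weightedKc (fun θ => cos θ ^ 2) m ≤ π / 2 := by
  have hle (θ : ℝ) : cos θ ^ 2 / √(1 - m * sin θ ^ 2) ≤ 1 := by
    rw [div_le_one (sqrt_one_sub_mul_sin_sq_pos hm θ)]
    refine le_sqrt_of_sq_le ?_
    calc (cos θ ^ 2) ^ 2 ≤ cos θ ^ 2 := pow_le_of_le_one (sq_nonneg _) (cos_sq_le_one θ) two_ne_zero
      _ = 1 - 1 * sin θ ^ 2 := by rw [cos_sq', one_mul]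
      _ ≤ 1 - m * sin θ ^ 2 := by gcongr
  calc weightedKc (fun θ => cos θ ^ 2) m ≤ ∫ _ in (0 : ℝ)..(π / 2), (1 : ℝ) :=
        integral_mono (by positivity)
          (continuousOn_div_sqrt_one_sub_mul_sin_sq (by fun_prop) hm).intervalIntegrable
          intervalIntegrable_const hle
    _ = π / 2 := by simp

theorem tendsto_phiFun_nhdsLT_one : Tendsto phiFun (𝓝[<] 1) (𝓝 1) := by
  have hcos : Tendsto (fun m => 1 - phiFun m) (𝓝[<] 1) (𝓝 0) := by
    refine squeeze_zero' ?_ ?_ (tendsto_Kc_nhdsLT_one.const_div_atTop (π / 2))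
    · filter_upwards [self_mem_nhdsWithin] with m hm
      rw [one_sub_phiFun hm]
      exact div_nonneg (weightedKc_nonneg fun θ _ => sq_nonneg _) (Kc_pos hm).le
    · filter_upwards [self_mem_nhdsWithin] with m hm
      rw [one_sub_phiFun hm]
      exact div_le_div_of_nonneg_right (weightedKc_cos_sq_le hm) (Kc_pos hm).le
  simpa using hcos.const_sub 1

theorem tendsto_phiFun_atBot : Tendsto phiFun atBot (𝓝 0) := by
  have hlim : Tendsto (fun m => 1 - phiFun (m / (m - 1))) atBot (𝓝 0) := by
    simpa using (tendsto_phiFun_nhdsLT_one.comp tendsto_div_sub_one_atBot).const_sub 1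
  refine hlim.congr' ?_
  filter_upwards [eventually_lt_atBot 1] with m hm
  exact sub_eq_of_eq_add (phiFun_add_phiFun_div_sub_one hm).symm

end Limits

theorem stmt_15 :
    ContinuousOn phiFun (Set.Iio (1 : ℝ)) ∧
    DifferentiableOn ℝ phiFun (Set.Iio (1 : ℝ)) ∧
    StrictMonoOn phiFun (Set.Iio (1 : ℝ)) ∧
    Tendsto phiFun atBot (nhds 0) ∧
    Tendsto phiFun (nhdsWithin 1 (Set.Iio (1 : ℝ))) (nhds 1) :=
  ⟨differentiableOn_phiFun.continuousOn, differentiableOn_phiFun, strictMonoOn_phiFun,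
    tendsto_phiFun_atBot, tendsto_phiFun_nhdsLT_one⟩
end
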